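/- Let β ≥ 1 be a real number. There exist constants C_β > 0 and C > 0, depending only on β, with the following property. For all ℓ₁ ≥ ℓ₃ > 0, every r ∈ ℝ³, every integer M ≥ 0, and every configuration (x₁, …, x_M) ∈ (ℝ³)^M, one has M_r^{(ℓ₁)} · 1(M_r^{(ℓ₁)} ≥ C_β (ℓ₁/ℓ₃)³) ≤ C ∑_{s ∈ ℓ₃ℤ³} M_{r,s}^{(ℓ₁,ℓ₃)} · 1(M_{r,s}^{(ℓ₁,ℓ₃)} ≥ β), where M_{r,s}^{(ℓ₁,ℓ₃)} := #{i : x_i ∈ Λ_r^{(ℓ₁)} ∩ Λ_s^{(ℓ₃)}}. -/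

import Mathlib

noncomputable section

local notation "E3" => EuclideanSpace ℝ (Fin 3)

/-- The number of points of the configuration `x` lying in the half-open cube of side
length `ℓ` centred at the point with coordinates `c`. -/
def boxCount {M : ℕ} (x : Fin M → E3) (c : Fin 3 → ℝ) (ℓ : ℝ) : ℕ :=
  Set.ncard {i : Fin M | ∀ d : Fin 3, -(ℓ / 2) ≤ x i d - c d ∧ x i d - c d < ℓ / 2}

/-- The number of points of the configuration `x` lying both in the cube of side `ℓ`
centred at `c` and in the cube of side `ℓ'` centred at `c'`. -/
def interBoxCount {M : ℕ} (x : Fin M → E3) (c : Fin 3 → ℝ) (ℓ : ℝ)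
    (c' : Fin 3 → ℝ) (ℓ' : ℝ) : ℕ :=
  Set.ncard {i : Fin M |
    (∀ d : Fin 3, -(ℓ / 2) ≤ x i d - c d ∧ x i d - c d < ℓ / 2) ∧
    (∀ d : Fin 3, -(ℓ' / 2) ≤ x i d - c' d ∧ x i d - c' d < ℓ' / 2)}

/-- The index of the cell of the lattice `ℓ ℤ³` (with half-open cells centred at the lattice
points) containing `y`. -/
def cellIndex (ℓ : ℝ) (y : E3) : Fin 3 → ℤ := fun d => ⌊y d / ℓ + 1 / 2⌋

theorem cellIndex_eq_iff {ℓ : ℝ} (hℓ : 0 < ℓ) (y : E3) (s : Fin 3 → ℤ) :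
    cellIndex ℓ y = s ↔ ∀ d : Fin 3, -(ℓ / 2) ≤ y d - ℓ * s d ∧ y d - ℓ * s d < ℓ / 2 := by
  rw [funext_iff]
  refine forall_congr' fun d => ?_
  have hy : y d = ℓ * (y d / ℓ) := by field_simp
  rw [cellIndex, Int.floor_eq_iff]
  constructor
  · rintro ⟨h₁, h₂⟩
    constructor <;> nlinarith
  · rintro ⟨h₁, h₂⟩
    constructor
    · by_contra! h
      nlinarith
    · by_contra! h
      nlinarith

/-- An interval of length `t ≥ 1` meets at most `3 t` cells of a unit grid. -/
theorem card_Icc_floor_le {a t : ℝ} (ht : 1 ≤ t) :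
    ((Finset.Icc ⌊a⌋ ⌊a + t⌋).card : ℝ) ≤ 3 * t := by
  have hle : ⌊a⌋ ≤ ⌊a + t⌋ + 1 := by
    have hmono : ⌊a⌋ ≤ ⌊a + t⌋ := Int.floor_mono (by linarith)
    lia
  have hcard : ((Finset.Icc ⌊a⌋ ⌊a + t⌋).card : ℝ) = ⌊a + t⌋ + 1 - ⌊a⌋ := by
    exact_mod_cast Int.card_Icc_of_le _ _ hle
  rw [hcard]
  linarith [Int.floor_le (a + t), Int.lt_floor_add_one a]

/-- Points of a cube of side `ℓ₁` lie in at most `27 (ℓ₁/ℓ₃)³` cells of side `ℓ₃ ≤ ℓ₁`. -/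
theorem card_image_cellIndex_le {ι : Type*} {ℓ₁ ℓ₃ : ℝ} (h₃ : 0 < ℓ₃) (h₁ : ℓ₃ ≤ ℓ₁)
    (r : Fin 3 → ℝ) (x : ι → E3) (S : Finset ι)
    (hS : ∀ i ∈ S, ∀ d : Fin 3, -(ℓ₁ / 2) ≤ x i d - r d ∧ x i d - r d < ℓ₁ / 2) :
    ((S.image fun i => cellIndex ℓ₃ (x i)).card : ℝ) ≤ 27 * (ℓ₁ / ℓ₃) ^ 3 := by
  let a : Fin 3 → ℝ := fun d => (r d - ℓ₁ / 2) / ℓ₃ + 1 / 2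
  have hsub : (S.image fun i => cellIndex ℓ₃ (x i)) ⊆
      Fintype.piFinset fun d => Finset.Icc ⌊a d⌋ ⌊a d + ℓ₁ / ℓ₃⌋ := by
    intro s hs
    obtain ⟨i, hi, rfl⟩ := Finset.mem_image.mp hs
    rw [Fintype.mem_piFinset]
    intro d
    obtain ⟨hl, hu⟩ := hS i hi d
    rw [Finset.mem_Icc]
    refine ⟨Int.floor_mono ?_, Int.floor_mono ?_⟩
    · have : (r d - ℓ₁ / 2) / ℓ₃ ≤ x i d / ℓ₃ := by gcongr; linarith
      simp only [a]
      linarith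
    · have : x i d / ℓ₃ ≤ (r d - ℓ₁ / 2 + ℓ₁) / ℓ₃ := by gcongr; linarith
      rw [add_div] at this
      simp only [a]
      linarith
  calc ((S.image fun i => cellIndex ℓ₃ (x i)).card : ℝ)
      ≤ ((Fintype.piFinset fun d => Finset.Icc ⌊a d⌋ ⌊a d + ℓ₁ / ℓ₃⌋).card : ℝ) := by
        exact_mod_cast Finset.card_le_card hsub
    _ = ∏ d, ((Finset.Icc ⌊a d⌋ ⌊a d + ℓ₁ / ℓ₃⌋).card : ℝ) := by
        rw [Fintype.card_piFinset, Nat.cast_prod]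
    _ ≤ ∏ _d : Fin 3, 3 * (ℓ₁ / ℓ₃) :=
        Finset.prod_le_prod (fun _ _ => Nat.cast_nonneg _)
          fun _ _ => card_Icc_floor_le ((one_le_div h₃).mpr h₁)
    _ = 27 * (ℓ₁ / ℓ₃) ^ 3 := by
        rw [Finset.prod_const, Finset.card_univ, Fintype.card_fin]
        ring

/-- Discarding the fibres of cardinality less than `β` loses at most `β` per fibre. -/
theorem card_le_sum_large_fibers_add {ι κ : Type*} [DecidableEq κ] (S : Finset ι) (g : ι → κ)
    {β : ℝ} (hβ : 0 ≤ β) :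
    (S.card : ℝ) ≤ (∑ s ∈ S.image g, ((S.filter fun i => g i = s).card : ℝ) *
      (if β ≤ ((S.filter fun i => g i = s).card : ℝ) then 1 else 0)) +
        (S.image g).card * β := by
  rw [Finset.card_eq_sum_card_image g S, Nat.cast_sum, ← nsmul_eq_mul, ← Finset.sum_const,
    ← Finset.sum_add_distrib]
  refine Finset.sum_le_sum fun s _ => ?_
  split_ifs with h
  · linarith
  · linarith [not_le.mp h]

/-- If a box of side `ℓ₁` contains at least `Cβ (ℓ₁/ℓ₃)³` points, then its occupation
number is controlled by the occupation numbers of those sub-boxes of side `ℓ₃`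
containing at least `β` points. -/
theorem occupied_box_controlled_by_small_boxes (β : ℝ) (hβ : 1 ≤ β) :
    ∃ Cβ > 0, ∃ C > 0, ∀ ℓ₁ ℓ₃ : ℝ, 0 < ℓ₃ → ℓ₃ ≤ ℓ₁ →
      ∀ (r : Fin 3 → ℝ) (M : ℕ) (x : Fin M → E3),
      (boxCount x r ℓ₁ : ℝ) *
          (if Cβ * (ℓ₁ / ℓ₃) ^ 3 ≤ (boxCount x r ℓ₁ : ℝ) then 1 else 0)
      ≤ C * ∑' s : Fin 3 → ℤ,
          (interBoxCount x r ℓ₁ (fun d => ℓ₃ * s d) ℓ₃ : ℝ) *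
            (if β ≤ (interBoxCount x r ℓ₁ (fun d => ℓ₃ * s d) ℓ₃ : ℝ) then 1 else 0) := by
  classical
  refine ⟨54 * β, by positivity, 2, by norm_num, fun ℓ₁ ℓ₃ h₃ h₁ r M x => ?_⟩
  let S : Finset (Fin M) := Finset.univ.filter fun i =>
    ∀ d : Fin 3, -(ℓ₁ / 2) ≤ x i d - r d ∧ x i d - r d < ℓ₁ / 2
  let g : Fin M → Fin 3 → ℤ := fun i => cellIndex ℓ₃ (x i)
  have hbox : boxCount x r ℓ₁ = S.card := by
    rw [boxCount, ← Set.ncard_coe_finset]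
    congr 1
    ext i
    simp [S]
  have hinter (s : Fin 3 → ℤ) : interBoxCount x r ℓ₁ (fun d => ℓ₃ * s d) ℓ₃ =
      (S.filter fun i => g i = s).card := by
    rw [interBoxCount, ← Set.ncard_coe_finset]
    congr 1
    ext i
    simp [S, g, cellIndex_eq_iff h₃]
  simp only [hbox, hinter]
  rw [tsum_eq_sum (s := S.image g)]
  · have hsum := card_le_sum_large_fibers_add S g (zero_le_one.trans hβ)
    have hcells : ((S.image g).card : ℝ) ≤ 27 * (ℓ₁ / ℓ₃) ^ 3 :=
      card_image_cellIndex_le h₃ h₁ r x S fun i hi => (Finset.mem_filter.mp hi).2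
    have hsmall := mul_le_mul_of_nonneg_right hcells (zero_le_one.trans hβ)
    by_cases h : 54 * β * (ℓ₁ / ℓ₃) ^ 3 ≤ (S.card : ℝ)
    · rw [if_pos h]
      linarith
    · rw [if_neg h, mul_zero]
      exact mul_nonneg zero_le_two (Finset.sum_nonneg fun s _ =>
        mul_nonneg (Nat.cast_nonneg _) (by split_ifs <;> norm_num))
  · intro s hs
    have hempty : (S.filter fun i => g i = s) = ∅ :=
      Finset.filter_eq_empty_iff.mpr fun i hi his =>
        hs (Finset.mem_image.mpr ⟨i, hi, his⟩)
    simp [hempty]
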